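/- For every $n\ge0$ and real $t$: $|B_n|^2=\sum_{r=0}^n t^{2r}L_r(n)$, where $L_r(n)=\sum_{0\le k\le l\le n}\rho_k\rho_l\,2^{(k,l)}\,\theta^lK_r(n-l)$, with $2^{(k,l)}=2$ if $k\ne l$ and $1$ if $k=l$. -/

import Mathlib

open scoped Classical

/-- `ρ 0 = 1`, `ρ n = a 1 ⋯ a n`. -/
noncomputable def rho (a : ℕ → ℝ) (n : ℕ) : ℝ := ∏ k ∈ Finset.Icc 1 n, a k

/-- `R_k^l = ∑_{s=k}^l η s · ρ l / ρ s`. -/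
noncomputable def Rkl (a η : ℕ → ℝ) (k l : ℕ) : ℝ :=
  ∑ s ∈ Finset.Icc k l, η s * (rho a l / rho a s)

/-- `T_k^l = (R_k^l)² ρ (k-1) / ρ l`. -/
noncomputable def Tkl (a η : ℕ → ℝ) (k l : ℕ) : ℝ :=
  (Rkl a η k l) ^ 2 * (rho a (k - 1) / rho a l)

/-- `Δ_r^n = ∑_{1 ≤ k₁ < ⋯ < k_r ≤ n} R_1^{k₁} R_{k₁+1}^{k₂} ⋯ R_{k_{r-1}+1}^{k_r}`
(`Δ_0^n = 1`, and `Δ_r^n = 0` for `r > n`). -/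
noncomputable def Delta (a η : ℕ → ℝ) (r n : ℕ) : ℝ :=
  ∑ k ∈ (Fintype.piFinset fun _ : Fin r => Finset.Icc 1 n).filter
      (fun k => ∀ i j : Fin r, i < j → k i < k j),
    ∏ i : Fin r, Rkl a η (if (i : ℕ) = 0 then 1 else k ⟨(i : ℕ) - 1, Nat.lt_of_le_of_lt (Nat.sub_le _ _) i.isLt⟩ + 1) (k i)

/-- `K_r(n) = ∑_{p=-r}^r (-1)^p Δ_{r+p}^n Δ_{r-p}^n`. -/
noncomputable def Kr (a η : ℕ → ℝ) (r n : ℕ) : ℝ :=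
  ∑ p ∈ Finset.Icc (-(r : ℤ)) (r : ℤ),
    (-1 : ℝ) ^ p * Delta a η ((r : ℤ) + p).toNat n * Delta a η ((r : ℤ) - p).toNat n

/-- Shift of the data: `θ^j` replaces `(a k, η k)` by `(a (k+j), η (k+j))`. -/
def shift (f : ℕ → ℝ) (j : ℕ) : ℕ → ℝ := fun k => f (k + j)

/-!
`B n` is a real polynomial in `z = -it`, so `|B n|²` is the value at `z` of the even polynomial
`B(X) B(-X)`, and everything reduces to an identity in `ℝ[X]`. Besides `B` consider the solution
`D` of the same recurrence with `D (-1) = 1` instead of `0`. Writing `B'`, `D'` for the solutions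
of the shifted recurrence, one has `B = D + a₁ B'` and `D = D' + η₁ X B'`. The term `η₁ X B'` drops
out of `D(X) B'(-X) + B'(X) D(-X)` because `X` changes sign under `X ↦ -X`, so iterating the two
relations expresses `B(X) B(-X)` through the products `D(X) D(-X)` of the shifted solutions.
Finally the `Δ_r^n` are the coefficients of `D n`, since both satisfy the same three-term
recurrence, and hence the `K_r(n)` are, up to sign, the even coefficients of `D(X) D(-X)`.
-/

open Polynomial Finset

section Shift

lemma shift_shift (f : ℕ → ℝ) (i j : ℕ) : shift (shift f i) j = shift f (j + i) := by
  funext k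
  simp only [shift, add_assoc]

lemma rho_zero (a : ℕ → ℝ) : rho a 0 = 1 := by simp [rho]

lemma rho_succ (a : ℕ → ℝ) (n : ℕ) : rho a (n + 1) = rho a n * a (n + 1) :=
  prod_Icc_succ_top (by omega) a

lemma rho_succ_eq_mul_shift (a : ℕ → ℝ) (n : ℕ) : rho a (n + 1) = a 1 * rho (shift a 1) n := by
  induction n with
  | zero => simp [rho]
  | succ n ih => rw [rho_succ, ih, rho_succ, mul_assoc]; rfl

lemma rho_ne_zero {a : ℕ → ℝ} (ha : ∀ k, 1 ≤ k → a k ≠ 0) (n : ℕ) : rho a n ≠ 0 :=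
  prod_ne_zero_iff.2 fun k hk => ha k (mem_Icc.1 hk).1

end Shift

section ReflectedProducts

variable {R : Type*} [CommRing R]

/-- `p(X) p(-X)`: for real `p` its value at a purely imaginary `z` is `|p(z)|²`. -/
noncomputable def normPoly (p : R[X]) : R[X] := p * p.comp (-X)

/-- `p(X) q(-X) + q(X) p(-X)`, the polarization of `normPoly`. -/
noncomputable def polarPoly (p q : R[X]) : R[X] := p * q.comp (-X) + q * p.comp (-X)

lemma normPoly_add_smul (p q : R[X]) (c : R) :
    normPoly (p + c • q) = normPoly p + c • polarPoly p q + c ^ 2 • normPoly q := by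
  simp only [normPoly, polarPoly, add_comp, smul_eq_C_mul, mul_comp, C_comp, C_pow]
  ring

lemma polarPoly_add_smul_self (p q : R[X]) (c : R) :
    polarPoly p (p + c • q) = (2 : R) • normPoly p + c • polarPoly p q := by
  simp only [normPoly, polarPoly, add_comp, smul_eq_C_mul, mul_comp, C_comp, C_ofNat]
  ring

lemma polarPoly_add_smul_X_mul (p q : R[X]) (c : R) :
    polarPoly (p + c • (X * q)) q = polarPoly p q := by
  simp only [polarPoly, add_comp, smul_eq_C_mul, mul_comp, C_comp, X_comp]
  ring

lemma coeff_comp_neg_X (p : R[X]) (n : ℕ) : (p.comp (-X)).coeff n = (-1) ^ n * p.coeff n := by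
  have h : (-X : R[X]) = C (-1) * X := by simp
  rw [h, comp_C_mul_X_coeff, mul_comm]

lemma coeff_normPoly (p : R[X]) (n : ℕ) :
    (normPoly p).coeff n = ∑ q ∈ antidiagonal n, (-1) ^ q.2 * p.coeff q.1 * p.coeff q.2 := by
  simp only [normPoly, coeff_mul, coeff_comp_neg_X]
  exact sum_congr rfl fun q _ => by ring

lemma normPoly_comp_neg_X (p : R[X]) : (normPoly p).comp (-X) = normPoly p := by
  rw [normPoly, mul_comp, comp_neg_X_comp_neg_X, mul_comm]

lemma natDegree_normPoly_le (p : R[X]) : (normPoly p).natDegree ≤ 2 * p.natDegree := by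
  have h : (p.comp (-X)).natDegree ≤ p.natDegree :=
    (natDegree_eq_of_degree_eq degree_comp_neg_X).le
  exact natDegree_mul_le.trans (by omega)

lemma expand_contract_two_of_comp_neg_X_eq [NoZeroDivisors R] [CharZero R] {p : R[X]}
    (hp : p.comp (-X) = p) : expand R 2 (contract 2 p) = p := by
  ext n
  rw [coeff_expand two_pos]
  split_ifs with hn
  · rw [coeff_contract two_ne_zero, Nat.div_mul_cancel hn]
  · have hodd : p.coeff n = -p.coeff n := by
      conv_lhs => rw [← hp, coeff_comp_neg_X, (Nat.odd_iff.2 (by omega)).neg_one_pow, neg_one_mul]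
    exact (self_eq_neg.1 hodd).symm

lemma aeval_eq_sum_even_of_comp_neg_X_eq [NoZeroDivisors R] [CharZero R] {A : Type*} [Semiring A]
    [Algebra R A] {p : R[X]} (hp : p.comp (-X) = p) {N : ℕ} (hN : p.natDegree ≤ 2 * N) (z : A) :
    aeval z p = ∑ r ∈ range (N + 1), p.coeff (2 * r) • (z ^ 2) ^ r := by
  have hdeg : (contract 2 p).natDegree < N + 1 := by
    refine Nat.lt_succ_of_le (natDegree_le_iff_coeff_eq_zero.2 fun m hm => ?_)
    rw [coeff_contract two_ne_zero]
    exact coeff_eq_zero_of_natDegree_lt (by omega)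
  conv_lhs => rw [← expand_contract_two_of_comp_neg_X_eq hp, expand_aeval, aeval_eq_sum_range' hdeg]
  simp only [coeff_contract two_ne_zero, mul_comm]

lemma norm_sq_aeval_neg_I_mul (p : ℝ[X]) {N : ℕ} (hN : p.natDegree ≤ N) (t : ℝ) :
    ‖aeval (-(Complex.I * t)) p‖ ^ 2 =
      ∑ r ∈ range (N + 1), t ^ (2 * r) * ((-1) ^ r * (normPoly p).coeff (2 * r)) := by
  set z : ℂ := -(Complex.I * t) with hz
  have hconj : (starRingEnd ℂ) (aeval z p) = aeval z (p.comp (-X)) := by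
    rw [← aeval_conj, aeval_comp]
    simp [hz]
  have hsq : z ^ 2 = -(t : ℂ) ^ 2 := by
    rw [hz, neg_sq, mul_pow, Complex.I_sq, neg_one_mul]
  have hdeg : (normPoly p).natDegree ≤ 2 * N := (natDegree_normPoly_le p).trans (by omega)
  have hnorm : ((‖aeval z p‖ ^ 2 : ℝ) : ℂ) = aeval z (normPoly p) := by
    rw [normPoly, map_mul, ← hconj, Complex.mul_conj']
    push_cast
    rfl
  rw [aeval_eq_sum_even_of_comp_neg_X_eq (normPoly_comp_neg_X p) hdeg, hsq] at hnorm
  apply Complex.ofReal_injective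
  rw [hnorm]
  push_cast
  refine sum_congr rfl fun r _ => ?_
  rw [Complex.real_smul, neg_pow, pow_mul]
  ring

end ReflectedProducts

section Recurrence

/-- The solution `y` of `y n = (1 + a n + η n X) y (n - 1) - a n y (n - 2)` with `y (-1) = u` and
`y 0 = 1`, stored with indices moved up by one: `solPoly a η u n` is `y (n - 1)`. At `X = -it` and
`u = 0` it is `B`; for `u = 1` it is the generating polynomial of the `Δ_r^n`. -/
noncomputable def solPoly (a η : ℕ → ℝ) (u : ℝ) : ℕ → ℝ[X]
  | 0 => C u
  | 1 => 1
  | n + 2 => (C (1 + a (n + 1)) + C (η (n + 1)) * X) * solPoly a η u (n + 1)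
      - C (a (n + 1)) * solPoly a η u n

variable (a η : ℕ → ℝ)

lemma natDegree_solPoly_le (u : ℝ) (n : ℕ) : (solPoly a η u n).natDegree ≤ n - 1 := by
  induction n using Nat.twoStepInduction with
  | zero => simp [solPoly]
  | one => simp [solPoly]
  | more n ih₀ ih₁ =>
    have hlin : (C (1 + a (n + 1)) + C (η (n + 1)) * X).natDegree ≤ 1 := by compute_degree
    rw [solPoly]
    exact (natDegree_sub_le_of_le (natDegree_mul_le_of_le hlin ih₁)
      ((natDegree_C_mul_le _ _).trans ih₀)).trans (by omega)

lemma solPoly_one_succ (n : ℕ) :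
    solPoly a η 1 (n + 1) =
      solPoly (shift a 1) (shift η 1) 1 n + η 1 • (X * solPoly (shift a 1) (shift η 1) 0 n) := by
  induction n using Nat.twoStepInduction with
  | zero => simp [solPoly]
  | one =>
    simp only [solPoly, smul_eq_C_mul, C_add, C_1]
    ring
  | more n ih₀ ih₁ =>
    rw [solPoly, ih₀, ih₁]
    simp only [solPoly, shift, smul_eq_C_mul]
    ring

lemma solPoly_zero_succ (n : ℕ) :
    solPoly a η 0 (n + 1) =
      solPoly a η 1 (n + 1) + a 1 • solPoly (shift a 1) (shift η 1) 0 n := by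
  induction n using Nat.twoStepInduction with
  | zero => simp [solPoly]
  | one => simp [solPoly, smul_eq_C_mul]
  | more n ih₀ ih₁ =>
    rw [solPoly, ih₀, ih₁, solPoly]
    simp only [solPoly, shift, smul_eq_C_mul]
    ring

lemma eq_aeval_solPoly {A : Type*} [Ring A] [Algebra ℝ A] (u : ℝ) (z : A) (B : ℤ → A)
    (hBm : B (-1) = algebraMap ℝ A u) (hB0 : B 0 = 1)
    (hB : ∀ n : ℕ, 1 ≤ n → B n =
      (algebraMap ℝ A (1 + a n) + algebraMap ℝ A (η n) * z) * B (n - 1)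
        - algebraMap ℝ A (a n) * B (n - 2)) (n : ℕ) :
    B (n - 1) = aeval z (solPoly a η u n) := by
  induction n using Nat.twoStepInduction with
  | zero => simpa [solPoly] using hBm
  | one => simpa [solPoly] using hB0
  | more n ih₀ ih₁ =>
    have hstep := hB (n + 1) (by omega)
    rw [ih₁, show ((n + 1 : ℕ) : ℤ) - 2 = n - 1 by push_cast; ring, ih₀] at hstep
    rw [show ((n + 2 : ℕ) : ℤ) - 1 = (n + 1 : ℕ) by push_cast; ring, hstep, solPoly]
    simp only [map_sub, map_mul, map_add, aeval_C, aeval_X]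

/-- `∑_{k ≤ l} ρ_k ρ_l 2^{(k,l)}`, the total factor of `θ^l K_r(n - l)` in `L_r(n)`. -/
noncomputable def pairWeight (l : ℕ) : ℝ :=
  ∑ k ∈ range (l + 1), rho a k * rho a l * (if k = l then (1 : ℝ) else 2)

lemma pairWeight_zero : pairWeight a 0 = 1 := by simp [pairWeight, rho_zero]

lemma pairWeight_succ (l : ℕ) :
    pairWeight a (l + 1) =
      a 1 * (2 * rho (shift a 1) l) + a 1 ^ 2 * pairWeight (shift a 1) l := by
  rw [pairWeight, sum_range_succ', pairWeight, mul_sum, add_comm]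
  congr 1
  · rw [rho_zero, rho_succ_eq_mul_shift, if_neg (Nat.succ_ne_zero l).symm]
    ring
  · refine sum_congr rfl fun k _ => ?_
    simp only [rho_succ_eq_mul_shift, Nat.add_right_cancel_iff]
    ring

lemma polarPoly_solPoly (n : ℕ) :
    polarPoly (solPoly a η 1 n) (solPoly a η 0 n) =
      ∑ l ∈ range n, (2 * rho a l) • normPoly (solPoly (shift a l) (shift η l) 1 (n - l)) := by
  induction n generalizing a η with
  | zero => simp [solPoly, polarPoly]
  | succ n ih =>
    rw [solPoly_zero_succ, polarPoly_add_smul_self, solPoly_one_succ, polarPoly_add_smul_X_mul,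
      ← solPoly_one_succ, ih, sum_range_succ', smul_sum, add_comm]
    congr 1
    · refine sum_congr rfl fun l _ => ?_
      rw [shift_shift, shift_shift, rho_succ_eq_mul_shift, Nat.add_sub_add_right, smul_smul,
        mul_left_comm]
    · rw [rho_zero, mul_one]
      rfl

lemma normPoly_solPoly_zero (n : ℕ) :
    normPoly (solPoly a η 0 n) =
      ∑ l ∈ range n, pairWeight a l • normPoly (solPoly (shift a l) (shift η l) 1 (n - l)) := by
  induction n generalizing a η with
  | zero => simp [solPoly, normPoly]
  | succ n ih =>
    have hpolar : polarPoly (solPoly a η 1 (n + 1)) (solPoly (shift a 1) (shift η 1) 0 n) =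
        polarPoly (solPoly (shift a 1) (shift η 1) 1 n) (solPoly (shift a 1) (shift η 1) 0 n) := by
      rw [solPoly_one_succ, polarPoly_add_smul_X_mul]
    rw [solPoly_zero_succ, normPoly_add_smul, hpolar, polarPoly_solPoly, ih, add_assoc,
      smul_sum, smul_sum, ← sum_add_distrib, sum_range_succ', add_comm]
    congr 1
    · refine sum_congr rfl fun l _ => ?_
      rw [shift_shift, shift_shift, pairWeight_succ, Nat.add_sub_add_right, smul_smul, smul_smul,
        add_smul]
    · rw [pairWeight_zero, one_smul]
      rfl

end Recurrence

section Tuples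

/-- The tuples `1 ≤ k₁ < ⋯ < k_r ≤ n`. -/
noncomputable def increasingTuples (r n : ℕ) : Finset (Fin r → ℕ) :=
  {k ∈ Fintype.piFinset fun _ => Icc 1 n | StrictMono k}

/-- The last entry `k_r` of `(k₁, …, k_r)`, with the convention `k₀ = 0` for the empty tuple. -/
def lastEntry {r : ℕ} (k : Fin r → ℕ) : ℕ := (Fin.cons 0 k : Fin (r + 1) → ℕ) (Fin.last r)

variable {r n m : ℕ} {k : Fin r → ℕ}

lemma mem_increasingTuples :
    k ∈ increasingTuples r n ↔ (∀ i, 1 ≤ k i ∧ k i ≤ n) ∧ StrictMono k := by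
  simp [increasingTuples]

lemma lastEntry_snoc : lastEntry (Fin.snoc k m : Fin (r + 1) → ℕ) = m := by
  rw [lastEntry, Fin.cons_snoc_eq_snoc_cons, Fin.snoc_last]

lemma lastEntry_le (hk : k ∈ increasingTuples r n) : lastEntry k ≤ n := by
  cases r with
  | zero => exact Nat.zero_le n
  | succ r => exact ((mem_increasingTuples.1 hk).1 (Fin.last r)).2

lemma snoc_mem_increasingTuples :
    (Fin.snoc k (m + 1) : Fin (r + 1) → ℕ) ∈ increasingTuples (r + 1) n ↔
      m < n ∧ k ∈ increasingTuples r m := by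
  simp only [mem_increasingTuples, Fin.forall_fin_succ', Fin.snoc_castSucc, Fin.snoc_last]
  constructor
  · rintro ⟨⟨hk, -, hm⟩, hmono⟩
    refine ⟨hm, fun i => ⟨(hk i).1, ?_⟩, fun i j hij => ?_⟩
    · simpa [Nat.lt_succ_iff] using hmono (Fin.castSucc_lt_last i)
    · simpa using hmono (Fin.castSucc_lt_castSucc_iff.2 hij)
  · rintro ⟨hm, hk, hmono⟩
    refine ⟨⟨fun i => ⟨(hk i).1, (hk i).2.trans hm.le⟩, by omega, hm⟩, ?_⟩
    intro i j hij
    induction j using Fin.lastCases with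
    | last =>
      obtain ⟨i, rfl⟩ := Fin.exists_castSucc_eq.2 hij.ne
      simpa [Nat.lt_succ_iff] using (hk i).2
    | cast j =>
      obtain ⟨i, rfl⟩ := Fin.exists_castSucc_eq.2 (hij.trans (Fin.castSucc_lt_last j)).ne
      simpa using hmono (Fin.castSucc_lt_castSucc_iff.1 hij)

lemma sum_increasingTuples_succ {M : Type*} [AddCommMonoid M] (f : (Fin (r + 1) → ℕ) → M) :
    ∑ k ∈ increasingTuples (r + 1) n, f k =
      ∑ m ∈ range n, ∑ k ∈ increasingTuples r m, f (Fin.snoc k (m + 1)) := by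
  have snoc_init {k : Fin (r + 1) → ℕ} (hk : k ∈ increasingTuples (r + 1) n) :
      (Fin.snoc (Fin.init k) (k (Fin.last r) - 1 + 1) : Fin (r + 1) → ℕ) = k := by
    rw [Nat.sub_add_cancel ((mem_increasingTuples.1 hk).1 _).1, Fin.snoc_init_self]
  rw [sum_sigma']
  refine sum_bij' (fun k _ => ⟨k (Fin.last r) - 1, Fin.init k⟩) (fun x _ => Fin.snoc x.2 (x.1 + 1))
    ?_ ?_ (fun k hk => snoc_init hk) ?_ (fun k hk => by rw [snoc_init hk])
  · intro k hk
    rw [← snoc_init hk, snoc_mem_increasingTuples] at hk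
    simpa using hk
  · rintro ⟨m, k⟩ hx
    simpa [snoc_mem_increasingTuples] using hx
  · rintro ⟨m, k⟩ -
    simp

end Tuples

section Delta

variable (a η : ℕ → ℝ)

/-- `R_1^{k₁} R_{k₁+1}^{k₂} ⋯ R_{k_{r-1}+1}^{k_r}`; prepending `k₀ = 0` makes the first factor
of the same form as the others. -/
noncomputable def chainProd {r : ℕ} (k : Fin r → ℕ) : ℝ :=
  ∏ i : Fin r, Rkl a η ((Fin.cons 0 k : Fin (r + 1) → ℕ) i.castSucc + 1) (k i)

/-- `∑ R_1^{k₁} ⋯ R_{k_{r-1}+1}^{k_r} R_{k_r+1}^n` over `1 ≤ k₁ < ⋯ < k_r ≤ n`. -/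
noncomputable def chainSum (r n : ℕ) : ℝ :=
  ∑ k ∈ increasingTuples r n, chainProd a η k * Rkl a η (lastEntry k + 1) n

lemma Delta_eq_sum_chainProd (r n : ℕ) :
    Delta a η r n = ∑ k ∈ increasingTuples r n, chainProd a η k := by
  refine sum_congr (by ext k; simp [mem_increasingTuples, StrictMono]) fun k _ => ?_
  refine prod_congr rfl fun i _ => ?_
  cases r with
  | zero => exact i.elim0
  | succ r =>
    induction i using Fin.cases with
    | zero => simp
    | succ i => rw [Fin.castSucc_succ, Fin.cons_succ]; rfl

lemma chainProd_snoc {r : ℕ} (k : Fin r → ℕ) (m : ℕ) :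
    chainProd a η (Fin.snoc k m : Fin (r + 1) → ℕ) =
      chainProd a η k * Rkl a η (lastEntry k + 1) m := by
  rw [chainProd, Fin.prod_univ_castSucc, Fin.cons_snoc_eq_snoc_cons]
  simp only [Fin.snoc_castSucc, Fin.snoc_last]
  rfl

lemma Rkl_succ_self (n : ℕ) : Rkl a η (n + 1) n = 0 := by simp [Rkl]

lemma Rkl_succ_right {a : ℕ → ℝ} (ha : ∀ k, 1 ≤ k → a k ≠ 0) {k l : ℕ} (h : k ≤ l + 1) :
    Rkl a η k (l + 1) = a (l + 1) * Rkl a η k l + η (l + 1) := by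
  rw [Rkl, sum_Icc_succ_top h, div_self (rho_ne_zero ha _), mul_one, Rkl, mul_sum]
  congr 1
  refine sum_congr rfl fun s _ => ?_
  rw [rho_succ]
  ring

lemma Delta_zero_left (n : ℕ) : Delta a η 0 n = 1 := by simp [Delta]

lemma Delta_succ_zero (r : ℕ) : Delta a η (r + 1) 0 = 0 := by
  rw [Delta_eq_sum_chainProd, sum_increasingTuples_succ, sum_range_zero]

lemma chainSum_zero_right (r : ℕ) : chainSum a η r 0 = 0 :=
  sum_eq_zero fun k hk => by
    rw [Nat.le_zero.1 (lastEntry_le hk), Rkl_succ_self, mul_zero]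

lemma chainSum_succ_right (r n : ℕ) :
    chainSum a η r (n + 1) =
      ∑ k ∈ increasingTuples r n, chainProd a η k * Rkl a η (lastEntry k + 1) (n + 1) := by
  cases r with
  | zero => simp [chainSum, increasingTuples, Subsingleton.strictMono]
  | succ r =>
    simp only [chainSum, sum_increasingTuples_succ, sum_range_succ, lastEntry_snoc, Rkl_succ_self,
      mul_zero, sum_const_zero, add_zero]

lemma Delta_succ_succ (r n : ℕ) :
    Delta a η (r + 1) (n + 1) = Delta a η (r + 1) n + chainSum a η r (n + 1) := by
  simp only [Delta_eq_sum_chainProd, sum_increasingTuples_succ, sum_range_succ, chainProd_snoc,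
    chainSum_succ_right]

variable {a}

lemma chainSum_succ_eq_add (ha : ∀ k, 1 ≤ k → a k ≠ 0) (r n : ℕ) :
    chainSum a η r (n + 1) = a (n + 1) * chainSum a η r n + η (n + 1) * Delta a η r n := by
  rw [chainSum_succ_right, chainSum, Delta_eq_sum_chainProd, mul_sum, mul_sum, ← sum_add_distrib]
  refine sum_congr rfl fun k hk => ?_
  rw [Rkl_succ_right η ha (Nat.succ_le_succ (lastEntry_le hk))]
  ring

lemma Delta_recurrence (ha : ∀ k, 1 ≤ k → a k ≠ 0) (r n : ℕ) :
    Delta a η (r + 1) (n + 2) =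
      (1 + a (n + 2)) * Delta a η (r + 1) (n + 1) + η (n + 2) * Delta a η r (n + 1)
        - a (n + 2) * Delta a η (r + 1) n := by
  rw [Delta_succ_succ, chainSum_succ_eq_add η ha]
  linear_combination -a (n + 2) * Delta_succ_succ a η r n

lemma Delta_succ_one (ha : ∀ k, 1 ≤ k → a k ≠ 0) (r : ℕ) :
    Delta a η (r + 1) 1 = η 1 * Delta a η r 0 := by
  rw [Delta_succ_succ, Delta_succ_zero, chainSum_succ_eq_add η ha, chainSum_zero_right]
  ring

lemma coeff_solPoly_one (ha : ∀ k, 1 ≤ k → a k ≠ 0) (n r : ℕ) :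
    (solPoly a η 1 (n + 1)).coeff r = Delta a η r n := by
  induction n using Nat.twoStepInduction generalizing r with
  | zero => cases r <;> simp [solPoly, coeff_one, Delta_zero_left, Delta_succ_zero]
  | one =>
    cases r with
    | zero => simp [solPoly, Delta_zero_left]
    | succ r =>
      cases r <;>
        simp [solPoly, coeff_one, coeff_C, Delta_succ_one η ha, Delta_zero_left, Delta_succ_zero]
  | more n ih₀ ih₁ =>
    rw [solPoly, coeff_sub, coeff_C_mul, ih₀, add_mul, coeff_add, coeff_C_mul, ih₁, mul_assoc,
      coeff_C_mul]
    cases r with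
    | zero => simp [Delta_zero_left]
    | succ r => rw [coeff_X_mul, ih₁, Delta_recurrence η ha]

end Delta

section Coefficients

lemma Kr_eq_sum_antidiagonal (a η : ℕ → ℝ) (r n : ℕ) :
    Kr a η r n =
      (-1) ^ r * ∑ q ∈ antidiagonal (2 * r), (-1) ^ q.2 * Delta a η q.1 n * Delta a η q.2 n := by
  rw [Kr, mul_sum]
  refine sum_bij' (fun p _ => ((r + p).toNat, (r - p).toNat)) (fun q _ => (q.1 : ℤ) - r)
    ?_ ?_ ?_ ?_ ?_
  · intro p hp
    simp only [mem_Icc, HasAntidiagonal.mem_antidiagonal] at hp ⊢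
    omega
  · intro q hq
    simp only [mem_Icc, HasAntidiagonal.mem_antidiagonal] at hq ⊢
    omega
  · intro p hp
    simp only [mem_Icc] at hp ⊢
    omega
  · rintro ⟨i, j⟩ hq
    simp only [HasAntidiagonal.mem_antidiagonal, Prod.mk.injEq] at hq ⊢
    omega
  · intro p hp
    have hsign : (-1 : ℝ) ^ p = (-1) ^ r * (-1) ^ (r - p).toNat := by
      have hle : 0 ≤ r - p := sub_nonneg.2 (mem_Icc.1 hp).2
      rw [← zpow_natCast, ← zpow_natCast, ← zpow_add₀ (by norm_num), Int.toNat_of_nonneg hle,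
        show (r : ℤ) + (r - p) = p + 2 * (r - p) by ring, zpow_add₀ (by norm_num),
        (even_two_mul _).neg_one_zpow, mul_one]
    rw [hsign]
    ring

lemma coeff_normPoly_solPoly_one {a : ℕ → ℝ} (η : ℕ → ℝ) (ha : ∀ k, 1 ≤ k → a k ≠ 0) (r n : ℕ) :
    (-1) ^ r * (normPoly (solPoly a η 1 (n + 1))).coeff (2 * r) = Kr a η r n := by
  simp only [Kr_eq_sum_antidiagonal, coeff_normPoly, coeff_solPoly_one η ha]

lemma coeff_normPoly_solPoly_zero {a : ℕ → ℝ} (η : ℕ → ℝ) (ha : ∀ k, 1 ≤ k → a k ≠ 0) (r n : ℕ) :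
    (-1) ^ r * (normPoly (solPoly a η 0 (n + 1))).coeff (2 * r) =
      ∑ l ∈ range (n + 1), ∑ k ∈ range (l + 1),
        rho a k * rho a l * (if k = l then (1 : ℝ) else 2) *
          Kr (shift a l) (shift η l) r (n - l) := by
  rw [normPoly_solPoly_zero, finsetSum_coeff, mul_sum]
  refine sum_congr rfl fun l hl => ?_
  have hshift : ∀ k, 1 ≤ k → shift a l k ≠ 0 := fun k hk => ha _ (by omega)
  rw [← sum_mul, ← pairWeight, coeff_smul, smul_eq_mul, mul_left_comm,
    Nat.succ_sub (mem_range_succ_iff.1 hl), coeff_normPoly_solPoly_one _ hshift]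

end Coefficients

theorem stmt_15_general
    (a η : ℕ → ℝ) (ha : ∀ k : ℕ, 1 ≤ k → a k ≠ 0) (t : ℝ)
    (B : ℤ → ℂ) (hBm : B (-1) = 0) (hB0 : B 0 = 1)
    (hB : ∀ n : ℕ, 1 ≤ n →
      B (n : ℤ) = (((1 + a n : ℝ) : ℂ) - Complex.I * (t : ℂ) * ((η n : ℝ) : ℂ)) * B ((n : ℤ) - 1)
        - ((a n : ℝ) : ℂ) * B ((n : ℤ) - 2)) (n : ℕ) :
    ‖B (n : ℤ)‖ ^ 2 =
      ∑ r ∈ Finset.range (n + 1), t ^ (2 * r) *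
        ∑ l ∈ Finset.range (n + 1), ∑ k ∈ Finset.range (l + 1),
          rho a k * rho a l * (if k = l then (1 : ℝ) else 2) *
            Kr (shift a l) (shift η l) r (n - l) := by
  have hBn : B n = aeval (-(Complex.I * t)) (solPoly a η 0 (n + 1)) := by
    rw [← eq_aeval_solPoly a η 0 (-(Complex.I * t)) B (by simpa using hBm) hB0]
    · simp
    · intro m hm
      rw [hB m hm, Complex.coe_algebraMap]
      ring
  rw [hBn, norm_sq_aeval_neg_I_mul _ (natDegree_solPoly_le a η 0 (n + 1))]
  simp only [coeff_normPoly_solPoly_zero η ha, Nat.add_sub_cancel]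

/-- `|B n|² = ∑_{r=0}^n t^{2r} L_r(n)` with
`L_r(n) = ∑_{0≤k≤l≤n} ρ k ρ l 2^{(k,l)} θ^l K_r(n-l)`. -/
theorem stmt_15
    (a η : ℕ → ℝ) (ha : ∀ k : ℕ, 1 ≤ k → 0 < a k) (t : ℝ)
    (B : ℤ → ℂ) (hBm : B (-1) = 0) (hB0 : B 0 = 1)
    (hB : ∀ n : ℕ, 1 ≤ n →
      B (n : ℤ) = (((1 + a n : ℝ) : ℂ) - Complex.I * (t : ℂ) * ((η n : ℝ) : ℂ)) * B ((n : ℤ) - 1)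
        - ((a n : ℝ) : ℂ) * B ((n : ℤ) - 2))
    (A : ℤ → ℂ) (hA0 : A 0 = 0) (hA1 : A 1 = ((a 1 : ℝ) : ℂ))
    (hA : ∀ n : ℕ, 2 ≤ n →
      A (n : ℤ) = (((1 + a n : ℝ) : ℂ) - Complex.I * (t : ℂ) * ((η n : ℝ) : ℂ)) * A ((n : ℤ) - 1)
        - ((a n : ℝ) : ℂ) * A ((n : ℤ) - 2)) :
    ∀ n : ℕ,
      ‖B (n : ℤ)‖ ^ 2 =
        ∑ r ∈ Finset.range (n + 1), t ^ (2 * r) *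
          ∑ l ∈ Finset.range (n + 1), ∑ k ∈ Finset.range (l + 1),
            rho a k * rho a l * (if k = l then (1 : ℝ) else 2) *
              Kr (shift a l) (shift η l) r (n - l) := by
  exact stmt_15_general a η (fun k hk => (ha k hk).ne') t B hBm hB0 hB
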